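/- There exists a positive constant c, independent of p, such that for every integer p ≥ 0 the smallest eigenvalue λ_p of the generalized eigenvalue problem λ ∫_{−1}^{1} (I φ)'(I v)' ds = ∫_{−1}^{1} φ v ds (for all v ∈ P_p) satisfies λ_p ≥ c (p+1)^{−4}. -/

import Mathlib

open Polynomial

/-- The `k`-th Legendre polynomial (Rodrigues' formula), normalized so that `L_k(1) = 1`
and `∫_{−1}^{1} L_k L_j ds = 2δ_{kj}/(2k+1)`. -/
noncomputable def legendre (k : ℕ) : Polynomial ℝ :=
  ((2 ^ k * (Nat.factorial k) : ℝ))⁻¹ •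
    ((fun q => Polynomial.derivative q)^[k] ((Polynomial.X ^ 2 - 1) ^ k))

/-- The reconstruction operator `I : P_p → P_{p+1}`,
`I v := v − v(−1)·(−1)^p (L_p − L_{p+1})/2`. -/
noncomputable def recon (p : ℕ) (v : Polynomial ℝ) : Polynomial ℝ :=
  v - (v.eval (-1) * (-1 : ℝ) ^ p / 2) • (legendre p - legendre (p + 1))

noncomputable def JJ : Polynomial ℝ →ₗ[ℝ] ℝ where
  toFun f := ∫ s in (-1 : ℝ)..1, f.eval s
  map_add' f g := by
    simp only [eval_add]
    exact intervalIntegral.integral_add (f.continuous.intervalIntegrable _ _)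
      (g.continuous.intervalIntegrable _ _)
  map_smul' c f := by
    simp only [eval_smul, smul_eq_mul, RingHom.id_apply]
    exact intervalIntegral.integral_const_mul _ _

lemma JJ_apply (f : Polynomial ℝ) : JJ f = ∫ s in (-1 : ℝ)..1, f.eval s := rfl

lemma JJ_derivative (f : Polynomial ℝ) : JJ (derivative f) = f.eval 1 - f.eval (-1) := by
  rw [JJ_apply]
  exact intervalIntegral.integral_eq_sub_of_hasDerivAt (fun x _ => f.hasDerivAt x)
    ((derivative f).continuous.intervalIntegrable _ _)

lemma JJ_mono {f g : Polynomial ℝ} (h : ∀ x, f.eval x ≤ g.eval x) : JJ f ≤ JJ g := by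
  rw [JJ_apply, JJ_apply]
  exact intervalIntegral.integral_mono_on (by norm_num) (f.continuous.intervalIntegrable _ _)
    (g.continuous.intervalIntegrable _ _) (fun x _ => h x)

lemma JJ_sq_nonneg (f : Polynomial ℝ) : 0 ≤ JJ (f * f) := by
  have := JJ_mono (f := 0) (g := f * f) (fun x => by simpa using mul_self_nonneg _)
  simpa using this

lemma legendre_eq (k : ℕ) : legendre k =
    ((2 ^ k * (Nat.factorial k) : ℝ))⁻¹ • (derivative^[k] ((X ^ 2 - 1 : ℝ[X]) ^ k)) := rfl

lemma iter_eval_zero (k j : ℕ) (hj : j < k) (e : ℝ) (he : e ^ 2 = 1) :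
    (derivative^[j] ((X ^ 2 - 1 : ℝ[X]) ^ k)).eval e = 0 := by
  obtain ⟨q, hq⟩ := pow_sub_dvd_iterate_derivative_pow (X ^ 2 - 1 : ℝ[X]) k j
  rw [hq]
  simp [he, Nat.sub_ne_zero_of_lt hj]

lemma iter_parts (k : ℕ) (j : ℕ) (hj : j ≤ k) (q : ℝ[X]) :
    JJ (derivative^[j] ((X ^ 2 - 1 : ℝ[X]) ^ k) * q)
      = (-1) ^ j * JJ ((X ^ 2 - 1 : ℝ[X]) ^ k * derivative^[j] q) := by
  induction j generalizing q with
  | zero => simp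
  | succ j ih =>
    have h1 := JJ_derivative (derivative^[j] ((X ^ 2 - 1 : ℝ[X]) ^ k) * q)
    rw [derivative_mul, map_add, eval_mul, eval_mul, iter_eval_zero k j hj 1 (by norm_num),
      iter_eval_zero k j hj (-1) (by norm_num), ih (by omega)] at h1
    rw [Function.iterate_succ_apply', Function.iterate_succ_apply, pow_succ (-1 : ℝ)]
    linarith

lemma legendre_orth (k : ℕ) (q : ℝ[X]) (hq : q.degree < k) : JJ (legendre k * q) = 0 := by
  have h0 : derivative^[k] q = 0 := iterate_derivative_eq_zero_of_degree_lt hq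
  rw [legendre_eq, smul_mul_assoc, map_smul, iter_parts k k le_rfl, h0]
  simp

lemma legendre_natDegree (k : ℕ) : (legendre k).natDegree ≤ k := by
  rw [legendre_eq]
  refine (natDegree_smul_le _ _).trans ((natDegree_iterate_derivative _ _).trans ?_)
  have : ((X ^ 2 - 1 : ℝ[X]) ^ k).natDegree ≤ k * 2 := by
    refine natDegree_pow_le_of_le k ?_
    compute_degree
  omega

lemma legendre_one (k : ℕ) : (legendre k).eval 1 = 1 := by
  have h := aeval_iterate_derivative_self (A := ℝ) ((X ^ 2 - 1 : ℝ[X]) ^ k) k (1 : ℝ)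
    (p' := (X + 1) ^ k) (by
      simp only [Algebra.algebraMap_self, Polynomial.map_id, ← mul_pow]; congr 1; simp; ring)
  rw [coe_aeval_eq_eval] at h
  rw [legendre_eq, eval_smul, h]
  have := Nat.factorial_ne_zero k
  simp
  norm_num
  field_simp

lemma legendre_neg_one (k : ℕ) : (legendre k).eval (-1) = (-1) ^ k := by
  have h := aeval_iterate_derivative_self (A := ℝ) ((X ^ 2 - 1 : ℝ[X]) ^ k) k (-1 : ℝ)
    (p' := (X - 1) ^ k) (by
      simp only [Algebra.algebraMap_self, Polynomial.map_id, ← mul_pow]; congr 1; simp; ring)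
  rw [coe_aeval_eq_eval] at h
  rw [legendre_eq, eval_smul, h]
  have := Nat.factorial_ne_zero k
  have h2 : (-1 - 1 : ℝ) ^ k = (-1) ^ k * 2 ^ k := by rw [← mul_pow]; norm_num
  simp [h2]
  field_simp

lemma legendre_eval_sq (k : ℕ) (e : ℝ) (he : e = 1 ∨ e = -1) : (legendre k).eval e ^ 2 = 1 := by
  rcases he with rfl | rfl
  · simp [legendre_one]
  · rw [legendre_neg_one, ← pow_mul, mul_comm, pow_mul]; simp

lemma degree_lt_of (f : ℝ[X]) (k : ℕ) (h : f.natDegree ≤ k) (h0 : f.coeff k = 0) :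
    f.degree < k := by
  rw [degree_lt_iff_coeff_zero]
  intro m hm
  rcases hm.eq_or_lt with rfl | hm
  · exact h0
  · exact coeff_eq_zero_of_natDegree_lt (by omega)

lemma legendre_norm (k : ℕ) : JJ (legendre k * legendre k) = 2 / (2 * k + 1) := by
  set L := legendre k with hL
  have hd : (X * derivative L - (k : ℝ) • L).degree < (k : WithBot ℕ) := by
    rcases k with _ | k
    · have := legendre_natDegree 0
      rw [← hL] at this
      have h2 : derivative L = 0 := derivative_of_natDegree_zero (by omega)
      simp [h2]
    · apply degree_lt_of
      · have := legendre_natDegree (k + 1)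
        rw [← hL] at this
        refine (natDegree_sub_le _ _).trans (max_le ?_ ((natDegree_smul_le _ _).trans this))
        refine natDegree_mul_le.trans ?_
        have := natDegree_derivative_le L
        have := natDegree_X_le (R := ℝ)
        omega
      · simp [coeff_X_mul, coeff_derivative]; ring
  have h1 := legendre_orth k _ hd
  rw [← hL] at h1
  have h2 := JJ_derivative (X * (L * L))
  simp only [eval_mul, eval_X] at h2
  have e1 := legendre_eval_sq k 1 (by simp)
  have e2 := legendre_eval_sq k (-1) (by simp)
  rw [← hL] at e1 e2
  have e : derivative (X * (L * L)) = (2 : ℝ) • (L * (X * derivative L - (k : ℝ) • L))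
      + (2 * k + 1 : ℝ) • (L * L) := by
    simp only [derivative_mul, derivative_X, smul_eq_C_mul, C_add, C_mul, map_one]
    rw [show (C (2 : ℝ)) = (2 : ℝ[X]) from rfl]
    ring
  rw [e, map_add, map_smul, map_smul, h1] at h2
  simp only [smul_eq_mul] at h2
  have : (2 * k + 1 : ℝ) ≠ 0 := by positivity
  rw [eq_div_iff this]
  linarith

lemma legendre_coeff (k : ℕ) : (legendre k).coeff k ≠ 0 := by
  intro h
  have h1 := legendre_orth k _ (degree_lt_of _ k (legendre_natDegree k) h)
  rw [legendre_norm] at h1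
  have : (0 : ℝ) < 2 / (2 * k + 1) := by positivity
  linarith

lemma le_of_sq_le_sq_aux (x y : ℝ) (hy : 0 ≤ y) (h : x ^ 2 ≤ y ^ 2) : x ≤ y :=
  le_of_abs_le (abs_le_of_sq_le_sq h hy)

lemma functional_bound (l : ℝ[X] →ₗ[ℝ] ℝ) (n : ℕ) : ∀ v : ℝ[X], v.degree < n →
    l v ^ 2 ≤ JJ (v * v) * ∑ k ∈ Finset.range n, (2 * k + 1 : ℝ) / 2 * l (legendre k) ^ 2 := by
  induction n with
  | zero =>
    intro v hv
    have : v = 0 := by simpa using hv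
    simp [this]
  | succ n ih =>
    intro v hv
    set c := v.coeff n / (legendre n).coeff n with hc
    set w := v - c • legendre n with hw
    have hv' : v.natDegree ≤ n := by
      rw [natDegree_le_iff_coeff_eq_zero]
      intro m hm
      exact (degree_lt_iff_coeff_zero _ _).1 hv m hm
    have hwd : w.degree < n := by
      apply degree_lt_of
      · exact (natDegree_sub_le _ _).trans
          (max_le hv' ((natDegree_smul_le _ _).trans (legendre_natDegree n)))
      · simp [hw, hc, legendre_coeff]
    have ho := legendre_orth n w hwd
    have hN := legendre_norm n
    have hve : v = w + c • legendre n := by simp [hw]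
    have hvv : JJ (v * v) = JJ (w * w) + c ^ 2 * (2 / (2 * n + 1)) := by
      have : v * v = w * w + (2 * c) • (legendre n * w) + (c ^ 2) • (legendre n * legendre n) := by
        rw [hve]
        simp only [smul_eq_C_mul, C_mul, C_pow]
        rw [show (C (2 : ℝ)) = (2 : ℝ[X]) from rfl]
        ring
      rw [this, map_add, map_add, map_smul, map_smul, ho, hN]
      simp
    have hlv : l v = l w + c * l (legendre n) := by
      conv_lhs => rw [hve]
      simp
    have hi := ih w hwd
    rw [Finset.sum_range_succ, hvv, hlv]
    have hW := JJ_sq_nonneg w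
    have hS : 0 ≤ ∑ k ∈ Finset.range n, (2 * k + 1 : ℝ) / 2 * l (legendre k) ^ 2 :=
      Finset.sum_nonneg (fun k _ => by positivity)
    generalize (∑ k ∈ Finset.range n, (2 * k + 1 : ℝ) / 2 * l (legendre k) ^ 2) = S at *
    generalize JJ (w * w) = W at *
    generalize l w = A at *
    generalize l (legendre n) = B at *
    have hM : (0 : ℝ) < (2 * n + 1) / 2 := by positivity
    have hMi : (2 : ℝ) / (2 * n + 1) = ((2 * n + 1 : ℝ) / 2)⁻¹ := by rw [inv_div]
    rw [hMi]
    generalize ((2 * n + 1 : ℝ) / 2) = M at *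
    have key : 2 * (A * (c * B)) ≤ W * (M * B ^ 2) + c ^ 2 * M⁻¹ * S := by
      have hY : 0 ≤ W * (M * B ^ 2) + c ^ 2 * M⁻¹ * S := by positivity
      apply le_of_sq_le_sq_aux _ _ hY
      have e1 : (W * (M * B ^ 2)) * (c ^ 2 * M⁻¹ * S) = W * S * (c * B) ^ 2 := by field_simp
      have e2 : A ^ 2 * (c * B) ^ 2 ≤ W * S * (c * B) ^ 2 :=
        mul_le_mul_of_nonneg_right hi (sq_nonneg _)
      nlinarith [sq_nonneg (W * (M * B ^ 2) - c ^ 2 * M⁻¹ * S)]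
    have : c ^ 2 * M⁻¹ * (M * B ^ 2) = c ^ 2 * B ^ 2 := by field_simp
    nlinarith

lemma trace_bound (e : ℝ) (he : e = 1 ∨ e = -1) (n : ℕ) (v : ℝ[X]) (hv : v.degree < n) :
    v.eval e ^ 2 ≤ JJ (v * v) * (n ^ 2 / 2) := by
  have h := functional_bound (leval e) n v hv
  simp only [leval_apply, legendre_eval_sq _ e he, mul_one] at h
  convert h using 2
  clear h hv
  induction n with
  | zero => simp
  | succ n ih => rw [Finset.sum_range_succ, ← ih]; push_cast; ring

lemma legendre_deriv_norm (k : ℕ) :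
    JJ (derivative (legendre k) * derivative (legendre k)) ≤ 2 * k ^ 2 := by
  set L := legendre k with hL
  have hdl : (derivative L).degree < k := by
    apply degree_lt_of
    · exact (natDegree_derivative_le L).trans (by have := legendre_natDegree k; rw [← hL] at this; omega)
    · rw [coeff_derivative, coeff_eq_zero_of_natDegree_lt, zero_mul]
      have := legendre_natDegree k; rw [← hL] at this; omega
  have hdl2 : (derivative (derivative L)).degree < k := degree_derivative_le.trans_lt hdl
  have h0 := legendre_orth k _ hdl2
  have h1 := JJ_derivative (L * derivative L)
  rw [derivative_mul, map_add, h0, add_zero, eval_mul, eval_mul] at h1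
  have t1 := trace_bound 1 (by simp) k _ hdl
  have t2 := trace_bound (-1) (by simp) k _ hdl
  have e1 := legendre_eval_sq k 1 (by simp)
  have e2 := legendre_eval_sq k (-1) (by simp)
  rw [← hL] at e1 e2
  have hnn := JJ_sq_nonneg (derivative L)
  generalize JJ (derivative L * derivative L) = N at *
  generalize eval 1 L = a at *
  generalize eval (-1) L = b at *
  generalize eval 1 (derivative L) = x at *
  generalize eval (-1) (derivative L) = y at *
  -- N = a x - b y, so N ^ 2 ≤ 2 (x ^ 2 + y ^ 2) ≤ 2 N k ^ 2
  have hN2 : N ^ 2 ≤ 2 * (x ^ 2 + y ^ 2) := by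
    have : (a * x) ^ 2 = x ^ 2 := by rw [mul_pow, e1, one_mul]
    have : (b * y) ^ 2 = y ^ 2 := by rw [mul_pow, e2, one_mul]
    rw [h1]
    nlinarith [sq_nonneg (a * x + b * y)]
  rcases hnn.eq_or_lt with h | h
  · rw [← h]; positivity
  · have : N * N ≤ N * (2 * k ^ 2) := by nlinarith
    exact le_of_mul_le_mul_left this h

lemma inverse_bound (p : ℕ) (v : ℝ[X]) (hv : v.natDegree ≤ p) :
    JJ (derivative v * derivative v) ≤ 2 * ((p : ℝ) + 1) ^ 4 * JJ (v * v) := by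
  have hd : v.degree < ((p + 1 : ℕ) : WithBot ℕ) :=
    lt_of_le_of_lt degree_le_natDegree (by exact_mod_cast Nat.lt_succ_of_le hv)
  have hm : JJ (derivative v * derivative v) ≤ JJ (JJ (v * v) • ∑ k ∈ Finset.range (p + 1),
      ((2 * k + 1 : ℝ) / 2) • (derivative (legendre k) * derivative (legendre k))) := by
    apply JJ_mono
    intro x
    have h := functional_bound ((leval x).comp derivative) (p + 1) v hd
    simp only [LinearMap.comp_apply, leval_apply] at h
    simpa [eval_finsetSum, sq] using h
  refine hm.trans ?_
  rw [map_smul, map_sum, smul_eq_mul, mul_comm]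
  refine mul_le_mul_of_nonneg_right ?_ (JJ_sq_nonneg v)
  have : ∀ k ∈ Finset.range (p + 1), JJ (((2 * k + 1 : ℝ) / 2) •
      (derivative (legendre k) * derivative (legendre k))) ≤ 2 * ((p : ℝ) + 1) ^ 3 := by
    intro k hk
    rw [map_smul, smul_eq_mul]
    have hk' : (k : ℝ) ≤ p := by exact_mod_cast Nat.lt_succ_iff.1 (Finset.mem_range.1 hk)
    calc (2 * k + 1 : ℝ) / 2 * JJ (derivative (legendre k) * derivative (legendre k))
        ≤ (2 * k + 1 : ℝ) / 2 * (2 * k ^ 2) := by gcongr; exact legendre_deriv_norm k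
      _ = (2 * k + 1 : ℝ) * k ^ 2 := by ring
      _ ≤ (2 * (p + 1)) * (p + 1) ^ 2 := by gcongr <;> linarith
      _ = _ := by ring
  refine (Finset.sum_le_card_nsmul _ _ _ this).trans (le_of_eq ?_)
  simp
  ring

lemma JJ_sub_sq (f g : ℝ[X]) : JJ ((f - g) * (f - g)) ≤ 2 * JJ (f * f) + 2 * JJ (g * g) := by
  have h := JJ_sq_nonneg (f + g)
  have e : (f - g) * (f - g) = (2 : ℝ) • (f * f) + (2 : ℝ) • (g * g) - (f + g) * (f + g) := by
    simp only [smul_eq_C_mul]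
    rw [show (C (2 : ℝ)) = (2 : ℝ[X]) from rfl]
    ring
  rw [e, map_sub, map_add, map_smul, map_smul]
  simp only [smul_eq_mul]
  linarith

lemma recon_bound (p : ℕ) (v : ℝ[X]) (hv : v.natDegree ≤ p) :
    JJ (derivative (recon p v) * derivative (recon p v))
      ≤ 6 * ((p : ℝ) + 1) ^ 4 * JJ (v * v) := by
  have hd : v.degree < ((p + 1 : ℕ) : WithBot ℕ) :=
    lt_of_le_of_lt degree_le_natDegree (by exact_mod_cast Nat.lt_succ_of_le hv)
  have ht := trace_bound (-1) (by simp) (p + 1) v hd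
  have hi := inverse_bound p v hv
  set D := derivative (legendre p) - derivative (legendre (p + 1)) with hD
  have hDb : JJ (D * D) ≤ 8 * ((p : ℝ) + 1) ^ 2 := by
    have h1 := legendre_deriv_norm p
    have h2 := legendre_deriv_norm (p + 1)
    have h3 := JJ_sub_sq (derivative (legendre p)) (derivative (legendre (p + 1)))
    have : (0 : ℝ) ≤ p := Nat.cast_nonneg p
    push_cast at h2
    rw [← hD] at h3
    nlinarith
  set a := v.eval (-1) * (-1 : ℝ) ^ p / 2 with ha
  have ha2 : a ^ 2 = v.eval (-1) ^ 2 / 4 := by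
    rw [ha, div_pow, mul_pow, ← pow_mul, mul_comm p 2, pow_mul]; norm_num
  have hr : derivative (recon p v) = derivative v - a • D := by
    rw [recon, derivative_sub, derivative_smul, derivative_sub]
  have hs := JJ_sub_sq (derivative v) (a • D)
  have he : JJ ((a • D) * (a • D)) = a ^ 2 * JJ (D * D) := by
    rw [smul_mul_smul_comm, map_smul, smul_eq_mul, sq]
  rw [hr]
  rw [he, ha2] at hs
  have hnn := JJ_sq_nonneg v
  have hDn := JJ_sq_nonneg D
  push_cast at ht
  have hprod : eval (-1) v ^ 2 / 4 * JJ (D * D)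
      ≤ (JJ (v * v) * (((p : ℝ) + 1) ^ 2 / 2)) / 4 * (8 * ((p : ℝ) + 1) ^ 2) := by
    gcongr
  calc _ ≤ _ := hs
    _ ≤ 2 * (2 * ((p : ℝ) + 1) ^ 4 * JJ (v * v)) +
        2 * ((JJ (v * v) * (((p : ℝ) + 1) ^ 2 / 2)) / 4 * (8 * ((p : ℝ) + 1) ^ 2)) := by
      gcongr
    _ = _ := by ring

/-- **Lower bound on the smallest eigenvalue.** There is a constant `c > 0`, independent of
`p`, such that for every `p ≥ 0`, the smallest eigenvalue `λ_p` of the generalized eigenvalue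
problem `λ ∫_{−1}^{1} (I φ)'(I v)' ds = ∫_{−1}^{1} φ v ds` for all `v ∈ P_p`
(with eigenfunctions `φ_j ∈ P_p` orthonormalized in the inner product
`(u,v) ↦ ∫_{−1}^{1} (I u)'(I v)' ds`, and eigenvalues ordered decreasingly) satisfies
`λ_p ≥ c (p+1)⁻⁴`. -/
theorem eigenvalue_lower_bound :
    ∃ c : ℝ, 0 < c ∧ ∀ p : ℕ, ∀ lam : Fin (p + 1) → ℝ, ∀ φ : Fin (p + 1) → Polynomial ℝ,
      (∀ j, (φ j).natDegree ≤ p) →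
      (∀ j, 0 < lam j) →
      (∀ j k : Fin (p + 1),
        (∫ s in (-1 : ℝ)..1,
            (Polynomial.derivative (recon p (φ j))).eval s *
              (Polynomial.derivative (recon p (φ k))).eval s)
          = if j = k then 1 else 0) →
      (∀ j : Fin (p + 1), ∀ v : Polynomial ℝ, v.natDegree ≤ p →
        lam j * (∫ s in (-1 : ℝ)..1,
            (Polynomial.derivative (recon p (φ j))).eval s *
              (Polynomial.derivative (recon p v)).eval s)
          = ∫ s in (-1 : ℝ)..1, (φ j).eval s * v.eval s) →
      (∀ j k : Fin (p + 1), j ≤ k → lam k ≤ lam j) →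
      c / ((p : ℝ) + 1) ^ 4 ≤ lam (Fin.last p) := by
  refine ⟨1 / 6, by norm_num, ?_⟩
  intro p lam φ hdeg _ horth heig _
  have h1 := horth (Fin.last p) (Fin.last p)
  have h2 := heig (Fin.last p) (φ (Fin.last p)) (hdeg _)
  rw [h1] at h2
  simp only [if_true, mul_one] at h1 h2
  have hb := recon_bound p (φ (Fin.last p)) (hdeg _)
  simp only [JJ_apply, eval_mul] at hb
  rw [h1, ← h2] at hb
  rw [div_le_iff₀ (by positivity)]
  linarith
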